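/- For all real numbers x ≥ 3^{10} and y ≥ 3, and all integers A and B of 𝒜*(x,y) such that P(A) < P(B), there exists a chain formed of integers of 𝒜*(x,y) whose first term is A and whose last term is B. -/

import Mathlib

/-- `Pmax n` is the largest prime factor of `n`, with the convention `Pmax 1 = 1`. -/
def Pmax (n : ℕ) : ℕ := if n ≤ 1 then 1 else n.primeFactors.sup id

/-- The Schinzel–Szekeres function: if `n = p₁ p₂ ⋯ p_Ω` with `p₁ ≥ p₂ ≥ ⋯ ≥ p_Ω` prime,
`SS n = max_{1 ≤ k ≤ Ω} p₁ ⋯ p_{k-1} p_k²`, and `SS 1 = 1`.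
(`Nat.primeFactorsList n` is the *increasing* list of prime factors with multiplicity;
the value produced for the index `j` is the one for `k = Ω - j`.) -/
def SS (n : ℕ) : ℕ :=
  ((List.range n.primeFactorsList.length).map
    (fun j => (n.primeFactorsList.drop j).headI * (n.primeFactorsList.drop j).prod)).foldr max 1

/-- A chain in the divisor graph: a finite sequence of pairwise distinct positive
integers in which any two consecutive terms are adjacent in the divisor graph
(the smaller divides the larger). -/
def IsDivChain (l : List ℕ) : Prop :=
  l.Nodup ∧ (∀ n ∈ l, 0 < n) ∧ l.Chain' (fun a b => a ∣ b ∨ b ∣ a)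

/-- `n ∈ 𝒜*(x,y)`, i.e. `n ≥ 1`, `n > √x`, `P(n) ≤ min(y, √x/27)` and `S(n) ≤ x`. -/
def AstarMem (x y : ℝ) (n : ℕ) : Prop :=
  1 ≤ n ∧ Real.sqrt x < (n : ℝ) ∧ (Pmax n : ℝ) ≤ min y (Real.sqrt x / 27) ∧ (SS n : ℝ) ≤ x

/-!
The divisor graph restricted to `𝒜*(x,y)` is connected. Multiply an element `p * n`, `p` prime, by
the largest power `2 ^ j` that keeps `S ≤ x`; then `4 * 2 ^ j * p * n > x`. Since `p ≤ √x / 27`,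
dividing by `p` leaves `2 ^ j * n > √x`, still in `𝒜*(x,y)`. So every prime factor can be traded for
a power of two, and any two powers of two are adjacent or equal.
-/

section LargestPrimeFactor

variable {n p : ℕ}

lemma Pmax_eq_max (n : ℕ) : Pmax n = max 1 (n.primeFactors.sup id) := by
  unfold Pmax
  split_ifs with hn
  · interval_cases n <;> simp
  · obtain ⟨p, hp⟩ := Nat.nonempty_primeFactors.2 (not_le.1 hn)
    exact (max_eq_right ((Nat.prime_of_mem_primeFactors hp).one_le.trans
      (Finset.le_sup (f := id) hp))).symm

lemma one_le_Pmax (n : ℕ) : 1 ≤ Pmax n :=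
  Pmax_eq_max n ▸ le_max_left _ _

lemma Pmax_le_iff {b : ℕ} : Pmax n ≤ b ↔ 1 ≤ b ∧ ∀ p ∈ n.primeFactors, p ≤ b := by
  rw [Pmax_eq_max, max_le_iff, Finset.sup_le_iff]
  rfl

lemma le_Pmax (hp : p ∈ n.primeFactors) : p ≤ Pmax n :=
  (Pmax_le_iff.1 le_rfl).2 p hp

lemma Pmax_le_Pmax_of_dvd {d : ℕ} (hd : d ∣ n) (hn : n ≠ 0) : Pmax d ≤ Pmax n :=
  Pmax_le_iff.2 ⟨one_le_Pmax n, fun _ hp => le_Pmax (Nat.primeFactors_mono hd hn hp)⟩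

lemma Pmax_prime_pow_mul_le (hp : p.Prime) (hpn : p ≤ Pmax n) (j : ℕ) :
    Pmax (p ^ j * n) ≤ Pmax n := by
  refine Pmax_le_iff.2 ⟨one_le_Pmax n, fun q hq => ?_⟩
  obtain ⟨hq_prime, hq_dvd, hne⟩ := Nat.mem_primeFactors.1 hq
  rcases hq_prime.dvd_mul.1 hq_dvd with hqp | hqn
  · exact (Nat.prime_dvd_prime_iff_eq hq_prime hp).1 (hq_prime.dvd_of_dvd_pow hqp) ▸ hpn
  · exact le_Pmax (Nat.mem_primeFactors.2 ⟨hq_prime, hqn, right_ne_zero_of_mul hne⟩)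

end LargestPrimeFactor

section SchinzelSzekeres

/-- The Schinzel–Szekeres function as a recursion on the increasing list of prime factors; it is
the form of `SS` suited to induction. -/
def schinzelSzekeresList : List ℕ → ℕ
  | [] => 1
  | p :: l => max (p * (p :: l).prod) (schinzelSzekeresList l)

lemma SS_eq_schinzelSzekeresList (n : ℕ) : SS n = schinzelSzekeresList n.primeFactorsList := by
  unfold SS
  induction n.primeFactorsList with
  | nil => rfl
  | cons p l ih =>
    rw [List.length_cons, List.range_succ_eq_map, schinzelSzekeresList, ← ih]
    simp [Function.comp_def]

lemma schinzelSzekeresList_le_of_sublist {l₁ l₂ : List ℕ} (h : l₁.Sublist l₂)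
    (hpos : ∀ p ∈ l₂, 0 < p) : schinzelSzekeresList l₁ ≤ schinzelSzekeresList l₂ := by
  induction h with
  | slnil => exact le_rfl
  | cons p _ ih => exact (ih (List.forall_mem_cons.1 hpos).2).trans (le_max_right _ _)
  | cons_cons p h ih =>
    have hprod := Nat.le_of_dvd (List.prod_pos hpos) (h.cons_cons p).prod_dvd_prod
    exact max_le_max (Nat.mul_le_mul_left p hprod) (ih (List.forall_mem_cons.1 hpos).2)

variable {n p : ℕ}

lemma SS_le_SS_of_dvd {d : ℕ} (hd : d ∣ n) (hn : n ≠ 0) : SS d ≤ SS n := by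
  rw [SS_eq_schinzelSzekeresList, SS_eq_schinzelSzekeresList]
  exact schinzelSzekeresList_le_of_sublist (Nat.primeFactorsList_sublist_of_dvd hd hn)
    fun p hp => (Nat.prime_of_mem_primeFactorsList hp).pos

lemma primeFactorsList_prime_mul (hp : p.Prime) (hn : n ≠ 0)
    (hmin : ∀ q ∈ n.primeFactorsList, p ≤ q) :
    (p * n).primeFactorsList = p :: n.primeFactorsList := by
  have hperm : (p * n).primeFactorsList.Perm (p :: n.primeFactorsList) :=
    (Nat.primeFactorsList_unique (by rw [List.prod_cons, Nat.prod_primeFactorsList hn])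
      (List.forall_mem_cons.2 ⟨hp, fun _ => Nat.prime_of_mem_primeFactorsList⟩)).symm
  exact hperm.eq_of_pairwise' (Nat.primeFactorsList_sorted _).pairwise
    (List.pairwise_cons.2 ⟨hmin, (Nat.primeFactorsList_sorted n).pairwise⟩)

lemma SS_prime_mul (hp : p.Prime) (hn : n ≠ 0) (hmin : ∀ q ∈ n.primeFactorsList, p ≤ q) :
    SS (p * n) = max (p * (p * n)) (SS n) := by
  rw [SS_eq_schinzelSzekeresList, SS_eq_schinzelSzekeresList,
    primeFactorsList_prime_mul hp hn hmin, schinzelSzekeresList, List.prod_cons,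
    Nat.prod_primeFactorsList hn]

lemma SS_two_pow_mul_le (hn : n ≠ 0) (j : ℕ) :
    SS (2 ^ j * n) ≤ max (2 * (2 ^ j * n)) (SS n) := by
  induction j with
  | zero => simp
  | succ j ih =>
    have htwo : ∀ q ∈ (2 ^ j * n).primeFactorsList, 2 ≤ q :=
      fun _ hq => (Nat.prime_of_mem_primeFactorsList hq).two_le
    rw [pow_succ', mul_assoc, SS_prime_mul Nat.prime_two (by positivity) htwo]
    omega

lemma minFac_mul_self_le_SS (n : ℕ) : n.minFac * n ≤ SS n := by
  match n with
  | 0 | 1 => simp [SS]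
  | k + 2 =>
    have hprod : ((k + 2).minFac :: ((k + 2) / (k + 2).minFac).primeFactorsList).prod = k + 2 := by
      rw [← Nat.primeFactorsList_add_two, Nat.prod_primeFactorsList (by omega)]
    rw [SS_eq_schinzelSzekeresList, Nat.primeFactorsList_add_two, schinzelSzekeresList, hprod]
    exact le_max_left _ _

end SchinzelSzekeres

section DivisorGraph

/-- The divisor graph. Its vertex set is `ℕ` for convenience: `0` is excluded by inducing on sets of
positive integers. -/
def divisorGraph : SimpleGraph ℕ := SimpleGraph.fromRel (· ∣ ·)

variable {S : Set ℕ}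

lemma reachable_of_dvd {a b : S} (h : (a : ℕ) ∣ b) : (divisorGraph.induce S).Reachable a b := by
  by_cases hab : a = b
  · rw [hab]
  · exact SimpleGraph.Adj.reachable ⟨Subtype.coe_ne_coe.2 hab, Or.inl h⟩

lemma exists_isDivChain_of_reachable (hS : ∀ n ∈ S, 0 < n) {a b : S}
    (h : (divisorGraph.induce S).Reachable a b) :
    ∃ l : List ℕ, IsDivChain l ∧ (∀ n ∈ l, n ∈ S) ∧
      l.head? = some (a : ℕ) ∧ l.getLast? = some (b : ℕ) := by
  obtain ⟨w, hw⟩ := h.exists_isPath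
  have hmem : ∀ n ∈ w.support.map Subtype.val, n ∈ S :=
    List.forall_mem_map.2 fun v _ => v.2
  refine ⟨w.support.map Subtype.val, ⟨?_, fun n hn => hS n (hmem n hn), ?_⟩, hmem, ?_, ?_⟩
  · exact hw.support_nodup.map Subtype.val_injective
  · exact List.isChain_map_of_isChain _ (fun _ _ hadj => hadj.2) w.isChain_adj_support
  · rw [List.head?_map, List.head?_eq_some_head w.support_ne_nil, w.head_support, Option.map_some]
  · rw [List.getLast?_map, List.getLast?_eq_some_getLast w.support_ne_nil, w.getLast_support,
      Option.map_some]

end DivisorGraph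

/-- The divisor graph restricted to `𝒜*(x,y)`. -/
abbrev astarGraph (x y : ℝ) : SimpleGraph {n | AstarMem x y n} :=
  divisorGraph.induce {n | AstarMem x y n}

namespace AstarMem

variable {x y : ℝ} {d n p : ℕ}

lemma ne_zero (h : AstarMem x y n) : n ≠ 0 := Nat.one_le_iff_ne_zero.1 h.1

lemma of_dvd (h : AstarMem x y n) (hd : d ∣ n) (hlt : √x < d) : AstarMem x y d := by
  have hP : (Pmax d : ℝ) ≤ Pmax n := by exact_mod_cast Pmax_le_Pmax_of_dvd hd h.ne_zero
  have hSS : (SS d : ℝ) ≤ SS n := by exact_mod_cast SS_le_SS_of_dvd hd h.ne_zero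
  exact ⟨Nat.pos_of_dvd_of_pos hd h.1, hlt, hP.trans h.2.2.1, hSS.trans h.2.2.2⟩

lemma prime_le (h : AstarMem x y n) (hp : p.Prime) (hpn : p ∣ n) : (p : ℝ) ≤ √x / 27 := by
  have hpP : (p : ℝ) ≤ Pmax n := by
    exact_mod_cast le_Pmax (Nat.mem_primeFactors.2 ⟨hp, hpn, h.ne_zero⟩)
  exact hpP.trans (h.2.2.1.trans (min_le_right _ _))

lemma two_pow_mul (h : AstarMem x y n) (hn : n ≠ 1) {j : ℕ}
    (hj : ((2 * (2 ^ j * n) : ℕ) : ℝ) ≤ x) : AstarMem x y (2 ^ j * n) := by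
  have hn0 := h.ne_zero
  have htwo : 2 ≤ Pmax n :=
    (Nat.minFac_prime hn).two_le.trans
      (le_Pmax (Nat.mem_primeFactors.2 ⟨Nat.minFac_prime hn, n.minFac_dvd, hn0⟩))
  have hlarge : (n : ℝ) ≤ (2 ^ j * n : ℕ) := by
    exact_mod_cast Nat.le_mul_of_pos_left n (by positivity)
  have hP : (Pmax (2 ^ j * n) : ℝ) ≤ Pmax n := by
    exact_mod_cast Pmax_prime_pow_mul_le Nat.prime_two htwo j
  have hSS : (SS (2 ^ j * n) : ℝ) ≤ max ((2 * (2 ^ j * n) : ℕ) : ℝ) (SS n) := by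
    exact_mod_cast SS_two_pow_mul_le hn0 j
  exact ⟨Nat.one_le_iff_ne_zero.2 (by positivity), h.2.1.trans_le hlarge, hP.trans h.2.2.1,
    hSS.trans (max_le hj h.2.2.2)⟩

lemma two_mul_le (h : AstarMem x y n) (hn : n ≠ 1) : (2 * n : ℝ) ≤ x := by
  have hSS : 2 * n ≤ SS n :=
    (Nat.mul_le_mul_right n (Nat.minFac_prime hn).two_le).trans (minFac_mul_self_le_SS n)
  exact le_trans (by exact_mod_cast hSS) h.2.2.2

lemma exists_two_pow_mul (h : AstarMem x y n) (hn : n ≠ 1) :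
    ∃ j : ℕ, AstarMem x y (2 ^ j * n) ∧ x < 4 * (2 ^ j * n) := by
  have hpos : (0 : ℝ) < 2 * n := by have := h.1; positivity
  obtain ⟨j, hle, hlt⟩ :=
    exists_nat_pow_near ((one_le_div hpos).2 (h.two_mul_le hn)) (one_lt_two (α := ℝ))
  rw [le_div_iff₀ hpos] at hle
  rw [div_lt_iff₀ hpos, pow_succ] at hlt
  exact ⟨j, h.two_pow_mul hn (by push_cast; linarith), by linarith⟩

lemma exists_reachable_two_pow_mul (hp : p.Prime) (h : AstarMem x y (p * n)) :
    ∃ (j : ℕ) (hj : AstarMem x y (2 ^ j * n)), (astarGraph x y).Reachable ⟨_, h⟩ ⟨_, hj⟩ := by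
  obtain ⟨j, htop, hx_lt⟩ := h.exists_two_pow_mul fun h1 => hp.not_dvd_one (h1 ▸ dvd_mul_right p n)
  have hp_le := h.prime_le hp (dvd_mul_right p n)
  have hp_pos : (0 : ℝ) < p := by exact_mod_cast hp.pos
  have hx_pos : 0 < √x := by linarith
  have hlarge : √x < (2 ^ j * n : ℕ) := by
    refine lt_of_mul_lt_mul_left ?_ hx_pos.le
    calc √x * √x = x := Real.mul_self_sqrt (Real.sqrt_pos.1 hx_pos).le
      _ < p * (4 * (2 ^ j * n : ℕ)) := by push_cast at hx_lt ⊢; linarith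
      _ ≤ √x / 27 * (4 * (2 ^ j * n : ℕ)) := by gcongr
      _ ≤ √x * (2 ^ j * n : ℕ) := by
        have : 0 ≤ √x * (2 ^ j * n : ℕ) := by positivity
        linarith
  have hdvd : 2 ^ j * n ∣ 2 ^ j * (p * n) := mul_dvd_mul_left _ (dvd_mul_left n p)
  have hj := htop.of_dvd hdvd hlarge
  have up : (astarGraph x y).Reachable ⟨_, h⟩ ⟨_, htop⟩ := reachable_of_dvd (dvd_mul_left _ _)
  have down : (astarGraph x y).Reachable ⟨_, hj⟩ ⟨_, htop⟩ := reachable_of_dvd hdvd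
  exact ⟨j, hj, up.trans down.symm⟩

lemma exists_reachable_two_pow (h : AstarMem x y n) :
    ∃ (a : ℕ) (ha : AstarMem x y (2 ^ a)), (astarGraph x y).Reachable ⟨n, h⟩ ⟨_, ha⟩ := by
  suffices H : ∀ m k (hm : AstarMem x y (2 ^ k * m)),
      ∃ (a : ℕ) (ha : AstarMem x y (2 ^ a)), (astarGraph x y).Reachable ⟨_, hm⟩ ⟨_, ha⟩ by
    simpa only [pow_zero, one_mul] using H n 0 (by simpa only [pow_zero, one_mul] using h)
  intro m
  induction m using induction_on_primes with
  | zero => exact fun k hm => absurd (mul_zero _) hm.ne_zero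
  | one => exact fun k hm => ⟨k, by simpa using hm, by simp⟩
  | prime_mul p m hp ih =>
    intro k hm
    have hm' : AstarMem x y (p * (2 ^ k * m)) := by rwa [mul_left_comm]
    obtain ⟨j, hj, hreach⟩ := exists_reachable_two_pow_mul hp hm'
    have hj' : AstarMem x y (2 ^ (j + k) * m) := by rwa [pow_add, mul_assoc]
    obtain ⟨a, ha, hreach'⟩ := ih (j + k) hj'
    simp only [pow_add, mul_assoc] at hreach'
    simp only [mul_left_comm p] at hreach
    exact ⟨a, ha, hreach.trans hreach'⟩

end AstarMem

lemma astarGraph_preconnected (x y : ℝ) : (astarGraph x y).Preconnected := by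
  rintro ⟨A, hA⟩ ⟨B, hB⟩
  obtain ⟨a, ha, hAa⟩ := hA.exists_reachable_two_pow
  obtain ⟨b, hb, hBb⟩ := hB.exists_reachable_two_pow
  have hab : (astarGraph x y).Reachable ⟨_, ha⟩ ⟨_, hb⟩ := by
    rcases le_total a b with hle | hle
    · exact reachable_of_dvd (pow_dvd_pow 2 hle)
    · exact (reachable_of_dvd (pow_dvd_pow 2 hle)).symm
  exact hAa.trans (hab.trans hBb.symm)

theorem stmt_14_general {x y : ℝ} {A B : ℕ} (hA : AstarMem x y A) (hB : AstarMem x y B) :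
    ∃ l : List ℕ, IsDivChain l ∧ (∀ n ∈ l, AstarMem x y n) ∧
      l.head? = some A ∧ l.getLast? = some B :=
  exists_isDivChain_of_reachable (fun _ hn => hn.1) (astarGraph_preconnected x y ⟨A, hA⟩ ⟨B, hB⟩)

/-- Lemma 8.3: for `x ≥ 3¹⁰`, `y ≥ 3`, and `A, B ∈ 𝒜*(x,y)` with `P(A) < P(B)`,
there is a chain of integers of `𝒜*(x,y)` whose first term is `A` and whose last
term is `B`. -/
theorem stmt_14 (x y : ℝ) (hx : (3 : ℝ) ^ 10 ≤ x) (hy : 3 ≤ y) (A B : ℕ)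
    (hA : AstarMem x y A) (hB : AstarMem x y B) (hAB : Pmax A < Pmax B) :
    ∃ l : List ℕ, IsDivChain l ∧ (∀ n ∈ l, AstarMem x y n) ∧
      l.head? = some A ∧ l.getLast? = some B :=
  stmt_14_general hA hB
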